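/- arXiv:1405.6105 — 2 statements merged into one kernel-verified Lean document; each statement's English description precedes it below -/
import Mathlib

section
/- (Nagata) Let k, K, L be fields such that: (i) k ⊆ K, and k ⊆ L ⊆ K(x) where x is transcendental over K; (ii) K is finitely generated as a field extension of k; (iii) L ⊄ K. Then there exist a field M containing k and a field embedding of L into the rational function field M(t) such that M(t) is a finite extension of the image of L. -/
universe u v

lemma ext_hom {R A Ω : Type*} [CommRing R] [CommRing A] [IsDomain A] [Algebra R A]
    [Algebra.IsIntegral R A] [FaithfulSMul R A] [Field Ω] [IsAlgClosed Ω] (ρ : R →+* Ω) :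
    ∃ φ : A →+* Ω, φ.comp (algebraMap R A) = ρ := by
  have hP : (RingHom.ker ρ).IsPrime := RingHom.ker_isPrime ρ
  obtain ⟨Q, -, hQ, hQP⟩ := Ideal.exists_ideal_over_prime_of_isIntegral (S := A) (RingHom.ker ρ) ⊥ (by
    intro x hx
    have : algebraMap R A x = 0 := by simpa using hx
    have : x = 0 := (FaithfulSMul.algebraMap_injective R A) (by simpa using this)
    simp [this])
  let : Algebra R Ω := ρ.toAlgebra
  let : Algebra (R ⧸ RingHom.ker ρ) Ω := (RingHom.kerLift ρ).toAlgebra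
  have : Q.LiesOver (RingHom.ker ρ) := ⟨hQP.symm⟩
  have : FaithfulSMul (R ⧸ RingHom.ker ρ) Ω :=
    (faithfulSMul_iff_algebraMap_injective _ _).2 (RingHom.kerLift_injective ρ)
  have : FaithfulSMul (R ⧸ RingHom.ker ρ) (A ⧸ Q) := by
    rw [faithfulSMul_iff_algebraMap_injective, injective_iff_map_eq_zero]
    intro x
    obtain ⟨r, rfl⟩ := Ideal.Quotient.mk_surjective x
    intro h
    have h' : Ideal.Quotient.mk Q (algebraMap R A r) = 0 := h
    rw [Ideal.Quotient.eq_zero_iff_mem] at h' ⊢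
    rw [← hQP]
    exact h'
  have : Module.IsTorsionFree (R ⧸ RingHom.ker ρ) Ω := Module.isTorsionFree_iff_faithfulSMul.2 inferInstance
  have : Module.IsTorsionFree (R ⧸ RingHom.ker ρ) (A ⧸ Q) := Module.isTorsionFree_iff_faithfulSMul.2 inferInstance
  have : Algebra.IsIntegral (R ⧸ RingHom.ker ρ) (A ⧸ Q) := inferInstance
  have : Algebra.IsAlgebraic (R ⧸ RingHom.ker ρ) (A ⧸ Q) := inferInstance
  let f : (A ⧸ Q) →ₐ[R ⧸ RingHom.ker ρ] Ω := IsAlgClosed.lift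
  refine ⟨(f : (A ⧸ Q) →+* Ω).comp (Ideal.Quotient.mk Q), ?_⟩
  ext r
  have := f.commutes (Ideal.Quotient.mk _ r)
  exact this

lemma frac_hom {k D E E' : Type*} [Field k] [CommRing D] [Field E] [Field E'] [Algebra k D]
    [Algebra k E] [Algebra k E'] (N : D →ₐ[k] E) (hN : Function.Injective N) (ψ : D →ₐ[k] E') :
    ∃ (O : Subalgebra k E) (Ψ : O →ₐ[k] E'), ∀ n d, ψ d ≠ 0 →
      ∃ h : N n / N d ∈ O, Ψ ⟨_, h⟩ = ψ n / ψ d := by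
  have hd : ∀ d, ψ d ≠ 0 → N d ≠ 0 := by
    intro d h h'
    exact h (by rw [hN (h'.trans (map_zero N).symm), map_zero])
  let O : Subalgebra k E :=
    { carrier := {f | ∃ n d, ψ d ≠ 0 ∧ f = N n / N d}
      mul_mem' := by
        rintro _ _ ⟨n, d, h, rfl⟩ ⟨n', d', h', rfl⟩
        exact ⟨n * n', d * d', by simp [h, h'], by simp [div_mul_div_comm]⟩
      add_mem' := by
        rintro _ _ ⟨n, d, h, rfl⟩ ⟨n', d', h', rfl⟩
        refine ⟨n * d' + d * n', d * d', by simp [h, h'], ?_⟩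
        rw [div_add_div _ _ (hd _ h) (hd _ h')]; simp
      algebraMap_mem' := fun r => ⟨algebraMap k D r, 1, by simp, by simp⟩ }
  have key : ∀ n d n' d', ψ d ≠ 0 → ψ d' ≠ 0 → N n / N d = N n' / N d' → ψ n / ψ d = ψ n' / ψ d' := by
    intro n d n' d' h h' e
    rw [div_eq_div_iff (hd _ h) (hd _ h'), ← map_mul, ← map_mul] at e
    rw [div_eq_div_iff h h', ← map_mul, ← map_mul, hN e]
  choose nu de h1 h2 using fun f : O => f.2
  have val : ∀ (f : O) n d, ψ d ≠ 0 → (f : E) = N n / N d → ψ (nu f) / ψ (de f) = ψ n / ψ d :=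
    fun f n d h e => key _ _ _ _ (h1 f) h (by rw [← h2, e])
  let Ψ : O →ₐ[k] E' := 
    { toFun := fun f => ψ (nu f) / ψ (de f)
      map_one' := by rw [val 1 1 1 (by simp) (by simp)]; simp
      map_zero' := by rw [val 0 0 1 (by simp) (by simp)]; simp
      map_mul' := fun f g => by
        rw [val (f * g) (nu f * nu g) (de f * de g) (by simp [h1])
          (by simp [h2 f, h2 g, ← div_mul_div_comm])]
        simp [div_mul_div_comm]
      map_add' := fun f g => by
        rw [val (f + g) (nu f * de g + de f * nu g) (de f * de g) (by simp [h1])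
          (by 
            rw [map_add, map_mul, map_mul, map_mul, ← div_add_div _ _ (hd _ (h1 f)) (hd _ (h1 g)), ← h2, ← h2]; rfl)]
        rw [div_add_div _ _ (h1 f) (h1 g)]; simp
      commutes' := fun r => by
        rw [val (algebraMap k O r) (algebraMap k D r) 1 (by simp) (by simp)]; simp }
  exact ⟨O, Ψ, fun n d h => ⟨⟨n, d, h, rfl⟩, val _ _ _ h rfl⟩⟩

open Polynomial in
lemma spec_aux {k A K : Type*} [Field k] [CommRing A] [IsDomain A] [Field K] [Algebra k A] [Algebra k K]
    [Algebra A K] [IsScalarTower k A K] [IsFractionRing A K] (T : Finset (RatFunc K)) :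
    ∃ S : Finset A, 0 ∉ S ∧ ∀ (Ω : Type*) [Field Ω] [Algebra k Ω] (φ : A →ₐ[k] Ω),
      (∀ s ∈ S, φ s ≠ 0) → ∃ (O : Subalgebra k (RatFunc K)) (Ψ : O →ₐ[k] RatFunc Ω),
        (∀ t ∈ T, ∃ h : t ∈ O, t ≠ 0 → Ψ ⟨t, h⟩ ≠ 0) ∧
        (∃ h : RatFunc.X ∈ O, Ψ ⟨_, h⟩ = RatFunc.X) ∧
        ∀ a : A, ∃ h : RatFunc.C (algebraMap A K a) ∈ O, Ψ ⟨_, h⟩ = RatFunc.C (φ a) := by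
  classical
  let N : A[X] →ₐ[k] RatFunc K := (IsScalarTower.toAlgHom k K[X] (RatFunc K)).comp
    (Polynomial.mapAlgHom (IsScalarTower.toAlgHom k A K))
  have hNdef : ∀ p, N p = algebraMap K[X] (RatFunc K) (p.map (algebraMap A K)) := fun p => rfl
  have hN : Function.Injective N := by
    intro p q h
    rw [hNdef, hNdef] at h
    exact Polynomial.map_injective _ (IsFractionRing.injective A K) (IsFractionRing.injective K[X] _ h)
  have hfrac : ∀ t : RatFunc K, ∃ n d : A[X], d ≠ 0 ∧ t = N n / N d := by
    intro t
    obtain ⟨a, ha, hae⟩ := IsLocalization.integerNormalization_spec (nonZeroDivisors A) t.num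
    obtain ⟨b, hb, hbe⟩ := IsLocalization.integerNormalization_spec (nonZeroDivisors A) t.denom
    set p := IsLocalization.integerNormalization (nonZeroDivisors A) t.num
    set q := IsLocalization.integerNormalization (nonZeroDivisors A) t.denom
    have hsm : ∀ (c : A) (P : K[X]), c • P = (Polynomial.C c).map (algebraMap A K) * P := by
      intro c P
      rw [Polynomial.map_C, ← Polynomial.smul_eq_C_mul, algebraMap_smul]
    rw [hsm] at hae hbe
    have hN0 : ∀ c : A, c ∈ nonZeroDivisors A → N (Polynomial.C c) ≠ 0 := by
      intro c hc h
      have := hN (h.trans (map_zero N).symm)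
      rw [Polynomial.C_eq_zero] at this
      exact nonZeroDivisors.ne_zero hc this
    have e1 : N p = N (Polynomial.C a) * algebraMap _ _ t.num := by
      rw [hNdef, hae, map_mul, hNdef]
    have e2 : N q = N (Polynomial.C b) * algebraMap _ _ t.denom := by
      rw [hNdef, hbe, map_mul, hNdef]
    have hden : algebraMap K[X] (RatFunc K) t.denom ≠ 0 := RatFunc.algebraMap_ne_zero t.denom_ne_zero
    refine ⟨Polynomial.C b * p, Polynomial.C a * q, ?_, ?_⟩
    · intro h
      have := congrArg N h
      rw [map_mul, e2, map_zero] at this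
      simp [hN0 a ha, hN0 b hb, hden] at this
    · rw [map_mul, map_mul, e1, e2]
      have h1 := hN0 a ha
      have h2 := hN0 b hb
      conv_lhs => rw [← RatFunc.num_div_denom t]
      field_simp
  choose n d hd htd using hfrac
  have hcoef : ∀ p : A[X], ∃ s : A, s ≠ 0 ∧ (p ≠ 0 → ∃ i, p.coeff i = s) := by
    intro p
    by_cases hp : p = 0
    · exact ⟨1, one_ne_zero, fun h => absurd hp h⟩
    · exact ⟨p.leadingCoeff, by simpa using hp, fun _ => ⟨_, rfl⟩⟩
  choose co hco hco' using hcoef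
  refine ⟨T.image (fun t => co (n t)) ∪ T.image (fun t => co (d t)), ?_, ?_⟩
  · simp [hco]
  intro Ω _ _ φ hφ
  let ψ : A[X] →ₐ[k] RatFunc Ω := (IsScalarTower.toAlgHom k (Polynomial Ω) (RatFunc Ω)).comp
    (Polynomial.mapAlgHom φ)
  have hψdef : ∀ p, ψ p = algebraMap (Polynomial Ω) (RatFunc Ω) (p.map (φ : A →+* Ω)) := fun p => rfl
  have hψ : ∀ p, p ≠ 0 → φ (co p) ≠ 0 → ψ p ≠ 0 := by
    intro p hp h
    obtain ⟨i, hi⟩ := hco' p hp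
    rw [hψdef]
    apply RatFunc.algebraMap_ne_zero
    intro h0
    have := congrArg (fun P => P.coeff i) h0
    simp [hi] at this
    exact h this
  obtain ⟨O, Ψ, hO⟩ := frac_hom N hN ψ
  refine ⟨O, Ψ, ?_, ?_, ?_⟩
  · intro t ht
    have hdt := hψ (d t) (hd t) (hφ _ (by simp; exact Or.inr ⟨t, ht, rfl⟩))
    obtain ⟨h, e⟩ := hO (n t) (d t) hdt
    have hm : t ∈ O := by rw [htd t]; exact h
    refine ⟨hm, fun h0 => ?_⟩
    have : (⟨t, hm⟩ : O) = ⟨_, h⟩ := Subtype.ext (htd t)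
    rw [this, e]
    refine div_ne_zero (hψ _ ?_ (hφ _ (by simp; exact Or.inl ⟨t, ht, rfl⟩))) hdt
    intro h1
    apply h0
    rw [htd t, h1, map_zero, zero_div]
  · obtain ⟨h, e⟩ := hO Polynomial.X 1 (by simp)
    have e1 : N Polynomial.X / N 1 = RatFunc.X := by rw [map_one, div_one, hNdef]; simp
    have hm : RatFunc.X ∈ O := by rw [← e1]; exact h
    refine ⟨hm, ?_⟩
    have : (⟨_, hm⟩ : O) = ⟨_, h⟩ := Subtype.ext e1.symm
    rw [this, e, map_one, div_one, hψdef]; simp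
  · intro a
    obtain ⟨h, e⟩ := hO (Polynomial.C a) 1 (by simp)
    have e1 : N (Polynomial.C a) / N 1 = RatFunc.C (algebraMap A K a) := by
      rw [map_one, div_one, hNdef]; simp
    have hm : RatFunc.C (algebraMap A K a) ∈ O := by rw [← e1]; exact h
    refine ⟨hm, ?_⟩
    have : (⟨_, hm⟩ : O) = ⟨_, h⟩ := Subtype.ext e1.symm
    rw [this, e, map_one, div_one, hψdef]; simp

lemma spec {k K : Type*} [Field k] [Field K] [Algebra k K] {σ : Type*} {w : σ → K}
    (hw : IsTranscendenceBasis k w) (T : Finset (RatFunc K)) :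
    ∃ q : MvPolynomial σ k, q ≠ 0 ∧ ∀ (Ω : Type*) [Field Ω] [IsAlgClosed Ω] [Algebra k Ω] (c : σ → Ω),
      MvPolynomial.aeval c q ≠ 0 → ∃ (O : Subalgebra k (RatFunc K)) (Ψ : O →ₐ[k] RatFunc Ω),
        (∀ t ∈ T, ∃ h : t ∈ O, t ≠ 0 → Ψ ⟨t, h⟩ ≠ 0) ∧
        (∃ h : RatFunc.X ∈ O, Ψ ⟨_, h⟩ = RatFunc.X) ∧
        ∀ i, ∃ h : RatFunc.C (w i) ∈ O, Ψ ⟨_, h⟩ = RatFunc.C (c i) := by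
  classical
  let R := Algebra.adjoin k (Set.range w)
  let A := integralClosure R K
  have : Algebra.IsAlgebraic R K := hw.isAlgebraic
  have : IsFractionRing A K := integralClosure.isFractionRing_of_algebraic (fun x h => by
    exact Subtype.ext h)
  have : FaithfulSMul R A := by
    rw [faithfulSMul_iff_algebraMap_injective]
    intro x y h
    exact Subtype.ext (congrArg (fun a : A => (a : K)) h)
  obtain ⟨S, hS, hmain⟩ := spec_aux (k := k) (A := A) T
  have hdvd : ∀ s : A, ∃ r : R, r ≠ 0 ∧ (s ≠ 0 → s ∣ algebraMap R A r) := by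
    intro s
    by_cases hs : s = 0
    · exact ⟨1, one_ne_zero, fun h => absurd hs h⟩
    · obtain ⟨r, h, h'⟩ := IsAlgebraic.exists_nonzero_dvd (R := R) (s := s)
        (Algebra.IsAlgebraic.isAlgebraic s) (mem_nonZeroDivisors_of_ne_zero hs)
      exact ⟨r, h, fun _ => h'⟩
  choose r hr hr' using hdvd
  refine ⟨hw.1.aevalEquiv.symm (∏ s ∈ S, r s), ?_, ?_⟩
  · simp [Finset.prod_eq_zero_iff, hr]
  intro Ω _ _ _ c hc
  let ρ : R →ₐ[k] Ω := (MvPolynomial.aeval c).comp (hw.1.aevalEquiv.symm : R →ₐ[k] MvPolynomial σ k)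
  have hρ : ∀ i (h : w i ∈ R), ρ ⟨w i, h⟩ = c i := by
    intro i h
    have : (⟨w i, h⟩ : R) = hw.1.aevalEquiv (MvPolynomial.X i) := Subtype.ext (by simp)
    rw [this]
    simp [ρ]
  obtain ⟨φ, hφ⟩ := ext_hom (A := A) (ρ : R →+* Ω)
  have hφ' : ∀ x : R, φ (algebraMap R A x) = ρ x := fun x => congrArg (fun f => f x) hφ
  have hcomm : ∀ x, φ (algebraMap k A x) = algebraMap k Ω x := by
    intro x
    have := hφ' (algebraMap k R x)
    rw [ρ.commutes] at this
    exact this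
  let φ' : A →ₐ[k] Ω := { φ with commutes' := hcomm }
  obtain ⟨O, Ψ, h1, h2, h3⟩ := hmain Ω φ' (by
    intro s hs h0
    have hs0 : s ≠ 0 := fun h => hS (h ▸ hs)
    obtain ⟨u, hu⟩ := hr' s hs0
    apply hc
    have : ρ (r s) = 0 := by
      rw [← hφ', hu, map_mul]
      have : φ s = 0 := h0
      rw [this, zero_mul]
    change ρ (∏ s ∈ S, r s) = 0
    rw [map_prod]
    exact Finset.prod_eq_zero hs this)
  refine ⟨O, Ψ, h1, h2, fun i => ?_⟩
  have hi : w i ∈ R := Algebra.subset_adjoin ⟨i, rfl⟩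
  obtain ⟨h, e⟩ := h3 (algebraMap R A ⟨w i, hi⟩)
  refine ⟨h, e.trans ?_⟩
  congr 1
  exact (hφ' _).trans (hρ i hi)

lemma linind_adjoin {F L E ι Y : Type*} [Field F] [Field L] [Field E] [Algebra F L] [Algebra L E]
    [Algebra F E] [IsScalarTower F L E] {y : Y → E} (hy : AlgebraicIndependent L y)
    {v : ι → L} (hv : LinearIndependent F v) :
    LinearIndependent (Algebra.adjoin F (Set.range y)) (fun i => algebraMap L E (v i)) := by
  classical
  rw [linearIndependent_iff']
  intro s g hg i hi
  have hp : ∀ i, ∃ p : MvPolynomial Y F, MvPolynomial.aeval y p = (g i : E) := by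
    intro i
    have h : ∀ x ∈ Algebra.adjoin F (Set.range y), ∃ p : MvPolynomial Y F, MvPolynomial.aeval y p = x := by
      intro x hx
      rw [Algebra.adjoin_range_eq_range_aeval] at hx
      exact hx
    exact h _ (g i).2
  choose p hp using hp
  let Q : MvPolynomial Y L := ∑ i ∈ s, MvPolynomial.C (v i) * MvPolynomial.map (algebraMap F L) (p i)
  have hQ : MvPolynomial.aeval y Q = 0 := by
    rw [← hg]
    simp only [Q, map_sum, map_mul, MvPolynomial.aeval_map_algebraMap, hp, MvPolynomial.aeval_C]
    refine Finset.sum_congr rfl fun i _ => ?_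
    rw [mul_comm]; rfl
  have hQ0 : Q = 0 := hy (by rw [hQ, map_zero])
  have hpi : p i = 0 := by
    ext m
    have h := congrArg (MvPolynomial.coeff m) hQ0
    simp only [Q, MvPolynomial.coeff_sum, MvPolynomial.coeff_C_mul, MvPolynomial.coeff_map,
      MvPolynomial.coeff_zero] at h
    refine linearIndependent_iff'.1 hv s (fun i => (p i).coeff m) ?_ i hi
    rw [← h]
    refine Finset.sum_congr rfl fun i _ => ?_
    rw [Algebra.smul_def, mul_comm]
  apply Subtype.ext
  rw [← hp i, hpi, map_zero]; rfl

open scoped IntermediateField.algebraAdjoinAdjoin in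
lemma essFinite_sub (F L E : Type*) [Field F] [Field L] [Field E] [Algebra F L] [Algebra L E]
    [Algebra F E] [IsScalarTower F L E] [Algebra.EssFiniteType F E] :
    Algebra.EssFiniteType F L := by
  have : Algebra.EssFiniteType L E := .of_comp F L E
  obtain ⟨bs, hb⟩ := exists_isTranscendenceBasis F L
  obtain ⟨ys, hy⟩ := exists_isTranscendenceBasis L E
  set F1 := IntermediateField.adjoin F (Set.range (Subtype.val : bs → L)) with hF1
  have hLF1 : Algebra.IsAlgebraic F1 L := hb.isAlgebraic_field
  let F2 := IntermediateField.adjoin F1 (Set.range (Subtype.val : ys → E))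
  have hv := hb.sumElim_comp hy
  have hfinS := finite_of_isTranscendenceBasis hv
  have hfin : Finite bs := Finite.of_injective (Sum.inr : bs → ys ⊕ bs) Sum.inr_injective
  have : IsScalarTower F F2 E := IsScalarTower.of_algebraMap_eq fun x =>
    rfl
  have : Algebra.IsAlgebraic F2 E := by
    rw [hv.isAlgebraic_iff]
    rintro (i | i)
    · exact isAlgebraic_algebraMap (⟨i.1, IntermediateField.subset_adjoin _ _ ⟨i, rfl⟩⟩ : F2)
    · exact isAlgebraic_algebraMap (algebraMap F1 F2
        ⟨i.1, IntermediateField.subset_adjoin _ _ ⟨i, rfl⟩⟩)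
  have : Algebra.EssFiniteType F2 E := .of_comp F F2 E
  have : Module.Finite F2 E := Algebra.finite_of_essFiniteType_of_isAlgebraic
  have : Module.Finite F1 L := by
    let B := Module.Basis.ofVectorSpace F1 L
    have h1 := linind_adjoin hy.1 B.linearIndependent
    have h2 := (LinearIndependent.iff_fractionRing (Algebra.adjoin F1 (Set.range (Subtype.val : ys → E))) F2).1 h1
    have := h2.finite
    exact Module.Finite.of_basis B
  have : Algebra.EssFiniteType F F1 :=
    IntermediateField.essFiniteType_iff.2 (IntermediateField.fg_adjoin_of_finite (Set.finite_range _))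
  exact .comp F F1 L

lemma essFinite_ratFunc (k M : Type*) [Field k] [Field M] [Algebra k M] [Algebra.EssFiniteType k M] :
    Algebra.EssFiniteType k (RatFunc M) := by
  have : Algebra.EssFiniteType M (Polynomial M) := inferInstance
  have : Algebra.EssFiniteType (Polynomial M) (RatFunc M) :=
    .of_isLocalization _ (nonZeroDivisors (Polynomial M))
  have : Algebra.EssFiniteType M (RatFunc M) := .comp M (Polynomial M) (RatFunc M)
  exact .comp k M (RatFunc M)

lemma final_step (k : Type u) (L : Type*) (Ω : Type v) [Field k] [Field L] [Field Ω] [Algebra k L]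
    [Algebra k Ω] [Algebra.EssFiniteType k L] (e : L →ₐ[k] RatFunc Ω)
    (halg : ∀ x : RatFunc Ω, ∃ p : Polynomial L, p ≠ 0 ∧ p.eval₂ (e : L →+* RatFunc Ω) x = 0) :
    ∃ (M : Type v) (_ : Field M) (_ : Algebra k M) (emb : L →ₐ[k] RatFunc M),
      FiniteDimensional ↥(RingHom.fieldRange (emb : L →+* RatFunc M)) (RatFunc M) := by
  classical
  obtain ⟨s, hs⟩ := IntermediateField.fg_top k L
  let U : Finset Ω := s.biUnion fun l => (e l).num.coeffs ∪ (e l).denom.coeffs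
  let M : IntermediateField k Ω := IntermediateField.adjoin k (U : Set Ω)
  have hM : Algebra.EssFiniteType k M := IntermediateField.essFiniteType_iff.2 ⟨U, rfl⟩
  have hMR := essFinite_ratFunc k M
  let φ : Polynomial M →ₐ[k] RatFunc Ω := (IsScalarTower.toAlgHom k (Polynomial Ω) (RatFunc Ω)).comp
    (Polynomial.mapAlgHom M.val)
  have hφ : Function.Injective φ := by
    intro p q h
    exact Polynomial.map_injective (M.val : M →+* Ω) M.val.injective
      (IsFractionRing.injective (Polynomial Ω) (RatFunc Ω) h)
  let ι : RatFunc M →ₐ[k] RatFunc Ω := RatFunc.liftAlgHom φ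
    (nonZeroDivisors_le_comap_nonZeroDivisors_of_injective φ hφ)
  have hι : ∀ p : Polynomial M, ι (algebraMap _ _ p) = φ p := by
    intro p
    have := RatFunc.liftAlgHom_apply_div' φ
      (nonZeroDivisors_le_comap_nonZeroDivisors_of_injective φ hφ) p 1
    rw [map_one, map_one, map_one, div_one, div_one] at this
    exact this
  have hpoly : ∀ p : Polynomial Ω, (∀ c ∈ p.coeffs, c ∈ M) →
      algebraMap (Polynomial Ω) (RatFunc Ω) p ∈ ι.fieldRange := by
    intro p hp
    have : p ∈ Polynomial.lifts (M.val : M →+* Ω) := by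
      rw [Polynomial.lifts_iff_coeff_lifts]
      intro n
      by_cases h0 : p.coeff n = 0
      · rw [h0]; exact ⟨0, map_zero _⟩
      · exact ⟨⟨_, hp _ (Polynomial.coeff_mem_coeffs h0)⟩, rfl⟩
    obtain ⟨q, rfl⟩ := (Polynomial.mem_lifts _).1 this
    exact ⟨algebraMap _ _ q, hι q⟩
  have hle : e.fieldRange ≤ ι.fieldRange := by
    rw [AlgHom.fieldRange_eq_map, ← hs, IntermediateField.adjoin_map, IntermediateField.adjoin_le_iff]
    rintro _ ⟨l, hl, rfl⟩
    change e l ∈ ι.fieldRange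
    rw [← RatFunc.num_div_denom (e l)]
    refine div_mem (hpoly _ fun c hc => ?_) (hpoly _ fun c hc => ?_)
    · exact IntermediateField.subset_adjoin _ _
        (Finset.mem_coe.2 (Finset.mem_biUnion.2 ⟨l, hl, Finset.mem_union_left _ hc⟩))
    · exact IntermediateField.subset_adjoin _ _
        (Finset.mem_coe.2 (Finset.mem_biUnion.2 ⟨l, hl, Finset.mem_union_right _ hc⟩))
  let emb : L →ₐ[k] RatFunc M := ((AlgEquiv.ofInjectiveField ι).symm : ι.range →ₐ[k] RatFunc M).comp
    (e.codRestrict ι.range fun l => hle ⟨l, rfl⟩)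
  have hemb : ∀ l, ι (emb l) = e l := by
    intro l
    have := congrArg Subtype.val ((AlgEquiv.ofInjectiveField ι).apply_symm_apply
      (e.codRestrict ι.range (fun l => hle ⟨l, rfl⟩) l))
    exact this
  refine ⟨M, inferInstance, inferInstance, emb, ?_⟩
  let R := RingHom.fieldRange (emb : L →+* RatFunc M)
  let : Algebra k R := ((RingHom.rangeRestrictField (emb : L →+* RatFunc M)).comp
    (algebraMap k L)).toAlgebra
  have : IsScalarTower k R (RatFunc M) := IsScalarTower.of_algebraMap_eq fun x =>
    (emb.commutes x).symm
  have : Algebra.EssFiniteType R (RatFunc M) := .of_comp k R (RatFunc M)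
  have : Algebra.IsAlgebraic R (RatFunc M) := by
    constructor
    intro x
    obtain ⟨p, hp, hpx⟩ := halg (ι x)
    refine ⟨p.map (RingHom.rangeRestrictField (emb : L →+* RatFunc M)), ?_, ?_⟩
    · rwa [Polynomial.map_ne_zero_iff (RingHom.injective _)]
    · rw [Polynomial.aeval_def, Polynomial.eval₂_map]
      apply ι.injective
      rw [map_zero, ← hpx]
      have := Polynomial.hom_eval₂ p (emb : L →+* RatFunc M) (ι : RatFunc M →+* RatFunc Ω) x
      have h2 : (ι : RatFunc M →+* RatFunc Ω).comp (emb : L →+* RatFunc M) = e := RingHom.ext hemb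
      rw [h2] at this
      exact this
  exact Algebra.finite_of_essFiniteType_of_isAlgebraic

lemma alg_poly {k A ι : Type*} [Field k] [Field A] [Algebra k A] {x : ι → A}
    (hx : IsTranscendenceBasis k x) (a : A) (ha : a ≠ 0) :
    ∃ Q : Polynomial (MvPolynomial ι k), Q.coeff 0 ≠ 0 ∧
      Q.eval₂ (MvPolynomial.aeval x : MvPolynomial ι k →ₐ[k] A).toRingHom a = 0 := by
  have := hx.isAlgebraic
  obtain ⟨q, hq, hq'⟩ := IsAlgebraic.exists_nonzero_coeff_and_aeval_eq_zero
    (Algebra.IsAlgebraic.isAlgebraic (R := Algebra.adjoin k (Set.range x)) a)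
    (mem_nonZeroDivisors_of_ne_zero ha)
  refine ⟨q.map (hx.1.aevalEquiv.symm : _ →+* _), ?_, ?_⟩
  · simpa using hq
  · rw [Polynomial.eval₂_map, ← hq', Polynomial.aeval_def]
    congr 1
    ext z
    have := hx.1.algebraMap_aevalEquiv (hx.1.aevalEquiv.symm z)
    rw [AlgEquiv.apply_symm_apply] at this
    exact this.symm

lemma core {k L E E' : Type*} [Field k] [Field L] [Field E] [Field E'] [Algebra k L] [Algebra L E]
    [Algebra k E] [IsScalarTower k L E] [Algebra k E'] [Algebra.EssFiniteType k L]
    {B Y J : Type*} [Finite B] [Finite J] {b : B → L} (hb : IsTranscendenceBasis k b)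
    {y : Y → E} (hy : IsTranscendenceBasis L y) (t : J → E) (ht : ∀ j, t j ≠ 0)
    (hcard : Nat.card B ≤ Nat.card J) :
    ∃ T : Finset E, ∀ (O : Subalgebra k E) (Ψ : O →ₐ[k] E')
      (_ : ∀ t ∈ T, ∃ h : t ∈ O, t ≠ 0 → Ψ ⟨t, h⟩ ≠ 0)
      (_ : ∀ i, ∃ h : y i ∈ O, IsAlgebraic k (Ψ ⟨y i, h⟩))
      (htO : ∀ j, t j ∈ O) (_ : IsTranscendenceBasis k fun j => Ψ ⟨t j, htO j⟩),
      ∃ e : L →ₐ[k] E', ∀ x : E', ∃ p : Polynomial L, p ≠ 0 ∧ p.eval₂ (e : L →+* E') x = 0 := by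
  classical
  have := Fintype.ofFinite B
  have := Fintype.ofFinite J
  obtain ⟨s, hs⟩ := IntermediateField.fg_top k L
  have hu := hb.sumElim_comp hy
  set u : Y ⊕ B → E := Sum.elim y (algebraMap L E ∘ b) with hudef
  choose Q hQ hQ' using fun j => alg_poly hu (t j) (ht j)
  let s' : Finset L := s ∪ Finset.univ.image b
  have hs' : IntermediateField.adjoin k (s' : Set L) = ⊤ := by
    rw [eq_top_iff, ← hs]
    apply IntermediateField.adjoin.mono
    simp [s']
  refine ⟨s'.image (algebraMap L E) ∪
    Finset.univ.image (fun j => MvPolynomial.aeval u ((Q j).coeff 0)), ?_⟩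
  intro O Ψ hT hyO htO htb
  have hsO : ∀ l ∈ s', algebraMap L E l ∈ O := fun l hl =>
    (hT _ (Finset.mem_union_left _ (Finset.mem_image_of_mem _ hl))).1
  have hbO : ∀ i, algebraMap L E (b i) ∈ O := fun i => hsO _ (by simp [s'])
  have huO : ∀ i, u i ∈ O := by
    rintro (i | i)
    · exact (hyO i).1
    · exact hbO i
  let θ : MvPolynomial (Y ⊕ B) k →ₐ[k] O := MvPolynomial.aeval fun i => ⟨u i, huO i⟩
  have hθ : ∀ p, (θ p : E) = MvPolynomial.aeval u p := by
    intro p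
    have : (O.val.comp θ) = MvPolynomial.aeval u := by
      ext i; simp [θ]
    exact congrArg (fun f => f p) this
  let β : B → E' := fun i => Ψ ⟨algebraMap L E (b i), hbO i⟩
  let C := Algebra.adjoin k (Set.range β)
  let Ch : Subalgebra C E' := Subalgebra.algebraicClosure C E'
  have hCh : ∀ p, Ψ (θ p) ∈ Ch := by
    intro p
    have h1 : (Ψ.comp θ) = MvPolynomial.aeval fun i => Ψ ⟨u i, huO i⟩ := by
      ext i; simp [θ]
    have h2 : Ψ (θ p) ∈ Algebra.adjoin k (Set.range fun i => Ψ ⟨u i, huO i⟩) := by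
      rw [Algebra.adjoin_range_eq_range_aeval]
      exact ⟨p, (congrArg (fun f => f p) h1).symm⟩
    have h3 : Algebra.adjoin k (Set.range fun i => Ψ ⟨u i, huO i⟩) ≤ Ch.restrictScalars k := by
      rw [Algebra.adjoin_le_iff]
      rintro _ ⟨i | i, rfl⟩
      · have : IsAlgebraic k (Ψ ⟨y i, (hyO i).1⟩) := (hyO i).2
        exact this.extendScalars (FaithfulSMul.algebraMap_injective k C)
      · exact isAlgebraic_algebraMap (⟨β i, Algebra.subset_adjoin ⟨i, rfl⟩⟩ : C)
    exact h3 h2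
  have hCalg : Algebra.IsAlgebraic C E' := by
    rw [htb.isAlgebraic_iff]
    intro j
    have h0 : IsAlgebraic Ch (Ψ ⟨t j, htO j⟩) := by
      let ω : MvPolynomial (Y ⊕ B) k →+* Ch :=
        ((Ψ : O →+* E').comp (θ : MvPolynomial (Y ⊕ B) k →+* O)).codRestrict Ch hCh
      refine ⟨(Q j).map ω, ?_, ?_⟩
      · intro h0
        have h1 := congrArg (fun P => ((P.coeff 0 : Ch) : E')) h0
        obtain ⟨h, h2⟩ := hT (MvPolynomial.aeval u ((Q j).coeff 0)) (Finset.mem_union_right _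
          (Finset.mem_image_of_mem _ (Finset.mem_univ j)))
        refine h2 (fun h => hQ j (hu.1 (by rw [h, map_zero]))) ?_
        have h3 : (⟨_, h⟩ : O) = θ ((Q j).coeff 0) := Subtype.ext (hθ _).symm
        rw [h3]
        simp only [Polynomial.coeff_map, Polynomial.coeff_zero] at h1
        exact h1
      · rw [Polynomial.aeval_def, Polynomial.eval₂_map]
        have h1 : (Q j).eval₂ (θ : MvPolynomial (Y ⊕ B) k →+* O) ⟨t j, htO j⟩ = 0 := by
          apply Subtype.ext
          have h2 := Polynomial.hom_eval₂ (Q j) (θ : MvPolynomial (Y ⊕ B) k →+* O)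
            (O.val : O →+* E) ⟨t j, htO j⟩
          refine h2.trans ((Eq.trans ?_ (hQ' j)).trans rfl)
          congr 1
          exact RingHom.ext hθ
        have h2 := Polynomial.hom_eval₂ (Q j) (θ : MvPolynomial (Y ⊕ B) k →+* O)
            (Ψ : O →+* E') ⟨t j, htO j⟩
        rw [h1, map_zero] at h2
        exact h2.symm
    exact h0.restrictScalars C
  have hβ : IsTranscendenceBasis k β := by
    apply Algebra.IsAlgebraic.isTranscendenceBasis_of_lift_le_trdeg_of_finite
    have h1 := htb.lift_cardinalMk_eq_trdeg
    rw [← Nat.cast_card (α := J), Cardinal.lift_natCast, eq_comm, Cardinal.lift_eq_nat_iff] at h1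
    rw [h1, ← Nat.cast_card (α := B), Cardinal.lift_natCast, Cardinal.lift_natCast]
    exact_mod_cast hcard
  let D := Algebra.adjoin k (s' : Set L)
  have hDO : ∀ d : D, algebraMap L E d ∈ O := by
    intro d
    have : D ≤ O.comap (IsScalarTower.toAlgHom k L E) := by
      rw [Algebra.adjoin_le_iff]
      intro l hl
      exact hsO l hl
    exact this d.2
  let ψ : D →ₐ[k] E' := Ψ.comp (((IsScalarTower.toAlgHom k L E).comp D.val).codRestrict O hDO)
  have hbD : ∀ i, b i ∈ D := fun i => Algebra.subset_adjoin (by simp [s'])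
  let η : MvPolynomial B k →ₐ[k] D := MvPolynomial.aeval fun i => ⟨b i, hbD i⟩
  have hη : ∀ p, (η p : L) = MvPolynomial.aeval b p := by
    intro p
    have : (D.val.comp η) = MvPolynomial.aeval b := by
      ext i; simp [η]
    exact congrArg (fun f => f p) this
  have hψη : ∀ p, ψ (η p) = MvPolynomial.aeval β p := by
    intro p
    have : (ψ.comp η) = MvPolynomial.aeval β := by
      ext i; simp [η]; rfl
    exact congrArg (fun f => f p) this
  have hψ : Function.Injective ψ := by
    rw [injective_iff_map_eq_zero]
    intro d hd
    by_contra hd0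
    obtain ⟨P, hP, hP'⟩ := alg_poly hb (d : L) (fun h => hd0 (Subtype.ext h))
    have h1 : P.eval₂ (η : MvPolynomial B k →+* D) d = 0 := by
      apply Subtype.ext
      have h2 := Polynomial.hom_eval₂ P (η : MvPolynomial B k →+* D) (D.val : D →+* L) d
      refine h2.trans ((Eq.trans ?_ hP').trans rfl)
      congr 1
      exact RingHom.ext hη
    have h2 := Polynomial.hom_eval₂ P (η : MvPolynomial B k →+* D) (ψ : D →+* E') d
    have h3 : (ψ : D →+* E') d = 0 := hd
    rw [h1, map_zero, h3, Polynomial.eval₂_at_zero] at h2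
    apply hP
    apply hβ.1
    rw [map_zero, ← hψη]
    exact h2.symm
  have hfr : IsFractionRing D L := by
    apply IsFractionRing.of_field
    intro z
    have hz : z ∈ IntermediateField.adjoin k (s' : Set L) := by rw [hs']; trivial
    obtain ⟨p, hp, q, hq, h⟩ := IntermediateField.mem_adjoin_iff_div.1 hz
    exact ⟨⟨p, hp⟩, ⟨q, hq⟩, h⟩
  let e : L →ₐ[k] E' := IsFractionRing.liftAlgHom (g := ψ) hψ
  have he : ∀ d : D, e d = ψ d := fun d => IsFractionRing.lift_algebraMap hψ d
  refine ⟨e, fun x => ?_⟩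
  by_cases hx : x = 0
  · exact ⟨Polynomial.X, Polynomial.X_ne_zero, by simp [hx]⟩
  obtain ⟨P, hP, hP'⟩ := alg_poly hβ x hx
  refine ⟨P.map (MvPolynomial.aeval b : MvPolynomial B k →ₐ[k] L).toRingHom, ?_, ?_⟩
  · intro h
    have h1 := congrArg (fun P => P.coeff 0) h
    simp only [Polynomial.coeff_map, Polynomial.coeff_zero] at h1
    exact hP (hb.1 (by rw [map_zero]; exact h1))
  · rw [Polynomial.eval₂_map, ← hP']
    congr 1
    refine RingHom.ext fun p => ?_
    change e (MvPolynomial.aeval b p) = MvPolynomial.aeval β p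
    rw [← hη, he, hψη]

lemma pick {k Ω Z Y : Type*} [Field k] [Field Ω] [IsAlgClosed Ω] [Algebra k Ω] {ζ : Z → Ω}
    (hζ : AlgebraicIndependent k ζ) (q : MvPolynomial (Z ⊕ Y) k) (hq : q ≠ 0) :
    ∃ α : Y → Ω, (∀ i, IsAlgebraic k (α i)) ∧ MvPolynomial.aeval (Sum.elim ζ α) q ≠ 0 := by
  by_contra! hcon
  let f : MvPolynomial (Z ⊕ Y) k →ₐ[k] MvPolynomial Y Ω :=
    ((MvPolynomial.mapAlgHom (MvPolynomial.aeval ζ)).comp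
      (MvPolynomial.sumAlgEquiv k Y Z : _ →ₐ[k] _)).comp (MvPolynomial.rename Sum.swap)
  have hf : Function.Injective f := by
    intro p q h
    have h1 : MvPolynomial.map ((MvPolynomial.aeval ζ : MvPolynomial Z k →ₐ[k] Ω) : MvPolynomial Z k →+* Ω)
        (MvPolynomial.sumAlgEquiv k Y Z (MvPolynomial.rename Sum.swap p)) =
      MvPolynomial.map ((MvPolynomial.aeval ζ : MvPolynomial Z k →ₐ[k] Ω) : MvPolynomial Z k →+* Ω)
        (MvPolynomial.sumAlgEquiv k Y Z (MvPolynomial.rename Sum.swap q)) := h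
    exact MvPolynomial.rename_injective _ Sum.swap_rightInverse.injective
      ((MvPolynomial.sumAlgEquiv k Y Z).injective (MvPolynomial.map_injective _ hζ h1))
  have hev : ∀ α : Y → Ω, ∀ p, MvPolynomial.eval α (f p) = MvPolynomial.aeval (Sum.elim ζ α) p := by
    intro α p
    have : ((MvPolynomial.aeval α : MvPolynomial Y Ω →ₐ[Ω] Ω).restrictScalars k).comp f =
        MvPolynomial.aeval (Sum.elim ζ α) := by
      ext (i | i) <;> simp [f]
    have := congrArg (fun g => g p) this
    simpa [MvPolynomial.aeval_eq_eval] using this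
  apply hq
  apply hf
  rw [map_zero]
  have : IsAlgClosed (algebraicClosure k Ω) := (algebraicClosure.isAlgClosure k Ω).isAlgClosed
  have : Infinite (algebraicClosure k Ω) := IsAlgClosed.instInfinite
  refine MvPolynomial.funext_set (fun _ => (algebraicClosure k Ω : Set Ω)) (fun _ => Set.infinite_coe_iff.1 this) ?_
  intro α hα
  rw [hev, map_zero]
  exact hcon α fun i => mem_algebraicClosure_iff.1 (hα i (Set.mem_univ i))

lemma basis_X (K : Type*) [Field K] : IsTranscendenceBasis K (fun _ : Unit => (RatFunc.X : RatFunc K)) := by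
  have : Algebra.IsAlgebraic (Polynomial K) (RatFunc K) :=
    IsLocalization.isAlgebraic (RatFunc K) (nonZeroDivisors (Polynomial K))
  have h := (IsTranscendenceBasis.polynomial Unit K).algebraMap_comp (A := RatFunc K)
  convert h using 1
  funext i
  simp

lemma exists_Ω {k : Type u} {K : Type v} [Field k] [Field K] [Algebra k K] {Z : Type*} {z : Z → K}
    (hz : AlgebraicIndependent k z) : ∃ (Ω : Type v) (_ : Field Ω) (_ : IsAlgClosed Ω) (_ : Algebra k Ω)
      (ζ : Z → Ω), IsTranscendenceBasis k ζ := by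
  let S := Algebra.adjoin k (Set.range z)
  let Ω := AlgebraicClosure (FractionRing S)
  have : Algebra.IsAlgebraic S (FractionRing S) := IsLocalization.isAlgebraic (FractionRing S) (nonZeroDivisors S)
  have : Algebra.IsAlgebraic S Ω := Algebra.IsAlgebraic.trans S (FractionRing S) Ω
  have : FaithfulSMul S Ω := by
    rw [faithfulSMul_iff_algebraMap_injective, IsScalarTower.algebraMap_eq S (FractionRing S) Ω]
    exact (algebraMap (FractionRing S) Ω).injective.comp (IsFractionRing.injective S (FractionRing S))
  have h := hz.aevalEquiv.isTranscendenceBasis (IsTranscendenceBasis.mvPolynomial Z k)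
  exact ⟨Ω, inferInstance, inferInstance, inferInstance, _, h.algebraMap_comp (A := Ω)⟩

lemma alg_over_adjoin {k K : Type*} [Field k] [Field K] [Algebra k K] (L : IntermediateField k (RatFunc K))
    (hnc : ∃ a : RatFunc K, a ∈ L ∧ a ∉ (RatFunc.C : K →+* RatFunc K).range) :
    Algebra.IsAlgebraic (Algebra.adjoin L (Set.range (RatFunc.C : K →+* RatFunc K))) (RatFunc K) := by
  obtain ⟨a, haL, ha⟩ := hnc
  set S := Algebra.adjoin L (Set.range (RatFunc.C : K →+* RatFunc K))
  let κ : K →+* S := (RatFunc.C : K →+* RatFunc K).codRestrict S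
    (fun x => Algebra.subset_adjoin ⟨x, rfl⟩)
  let : Algebra K S := κ.toAlgebra
  have : IsScalarTower K S (RatFunc K) := IsScalarTower.of_algebraMap_eq fun x => rfl
  rw [(basis_X K).isAlgebraic_iff]
  intro _
  let a' : S := algebraMap L S ⟨a, haL⟩
  have ha' : (a' : RatFunc K) = a := rfl
  refine ⟨a.num.map κ - Polynomial.C a' * a.denom.map κ, ?_, ?_⟩
  · intro h
    have h1 := congrArg (fun P => ((P.coeff a.denom.natDegree : S) : RatFunc K)) h
    simp only [Polynomial.coeff_sub, Polynomial.coeff_C_mul, Polynomial.coeff_map, Polynomial.coeff_zero] at h1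
    have h2 : RatFunc.C (a.num.coeff a.denom.natDegree) - a * RatFunc.C (a.denom.coeff a.denom.natDegree) = 0 := h1
    rw [Polynomial.coeff_natDegree, RatFunc.monic_denom a, map_one, mul_one, sub_eq_zero] at h2
    exact ha ⟨_, h2⟩
  · have key : ∀ p : Polynomial K, Polynomial.aeval (RatFunc.X : RatFunc K) (p.map κ) = algebraMap _ _ p := by
      intro p
      have : Polynomial.aeval (RatFunc.X : RatFunc K) (p.map (algebraMap K S)) = algebraMap _ _ p := by
        rw [Polynomial.aeval_map_algebraMap]
        simp
      exact this
    rw [map_sub, map_mul, key, key, Polynomial.aeval_C]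
    change _ - a * _ = 0
    conv_lhs => enter [2, 1]; rw [← RatFunc.num_div_denom a]
    rw [div_mul_cancel₀ _ (RatFunc.algebraMap_ne_zero a.denom_ne_zero), sub_self]

theorem nagata_ruledness (k : Type u) (K : Type v) [Field k] [Field K] [Algebra k K]
    (hfg : ∃ s : Finset K, IntermediateField.adjoin k (s : Set K) = ⊤)
    (L : IntermediateField k (RatFunc K))
    (hnc : ∃ a : RatFunc K, a ∈ L ∧ a ∉ (RatFunc.C : K →+* RatFunc K).range) :
    ∃ (M : Type v) (_ : Field M) (_ : Algebra k M) (emb : ↥L →ₐ[k] RatFunc M),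
      FiniteDimensional ↥(RingHom.fieldRange (emb : ↥L →+* RatFunc M)) (RatFunc M) := by
  have hK : Algebra.EssFiniteType k K := IntermediateField.fg_top_iff.1 hfg
  have hE := essFinite_ratFunc k K
  have hL := essFinite_sub k L (RatFunc K)
  obtain ⟨bs, hb⟩ := exists_isTranscendenceBasis k L
  have hBfin := finite_of_isTranscendenceBasis hb
  have halg := alg_over_adjoin L hnc
  obtain ⟨Y, hYC, hy⟩ := exists_isTranscendenceBasis_subset (R := L)
    (Set.range (RatFunc.C : K →+* RatFunc K))
  choose y0 hy0 using fun i : Y => hYC i.2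
  have hLE : Algebra.EssFiniteType L (RatFunc K) := .of_comp k L (RatFunc K)
  have hYfin := finite_of_isTranscendenceBasis hy
  have hCk : ∀ x : k, RatFunc.C (algebraMap k K x) = algebraMap k (RatFunc K) x := fun x =>
    (IsScalarTower.algebraMap_apply k K (RatFunc K) x).symm
  have hy0i : AlgebraicIndependent k y0 := by
    apply AlgebraicIndependent.of_comp (IsScalarTower.toAlgHom k K (RatFunc K))
    have h1 : AlgebraicIndependent k (Subtype.val : Y → RatFunc K) :=
      hy.1.restrictScalars (FaithfulSMul.algebraMap_injective k L)
    convert h1 using 1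
    funext i
    exact hy0 i
  let S0 := Algebra.adjoin k (Set.range y0)
  obtain ⟨Z, hz⟩ := exists_isTranscendenceBasis S0 K
  have hyS := hy0i.aevalEquiv.isTranscendenceBasis (IsTranscendenceBasis.mvPolynomial Y k)
  have hw := hyS.sumElim_comp hz
  have hwY : ∀ i, (algebraMap S0 K ∘ (hy0i.aevalEquiv ∘ MvPolynomial.X)) i = y0 i := by
    intro i
    simp [S0]
  have hZi : AlgebraicIndependent k (Subtype.val : Z → K) := hw.1.comp Sum.inl Sum.inl_injective
  have hZfin := finite_of_algebraicIndependent hZi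
  obtain ⟨Ω, _, _, _, ζ, hζ⟩ := exists_Ω hZi
  have hEb := hw.sumElim_comp (basis_X K)
  have hEb' := hb.sumElim_comp hy
  have hcard : Nat.card bs ≤ Nat.card (Unit ⊕ Z) := by
    obtain ⟨eq⟩ := Cardinal.lift_mk_eq'.1 (hEb.lift_cardinalMk_eq hEb')
    have := Nat.card_congr eq
    rw [Nat.card_sum, Nat.card_sum, Nat.card_sum] at this
    rw [Nat.card_sum]
    change Nat.card Unit + (Nat.card Z + Nat.card Y) = Nat.card Y + Nat.card bs at this
    omega
  obtain ⟨T, hT⟩ := core (E' := RatFunc Ω) hb hy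
    (Sum.elim (fun _ => RatFunc.X) (fun j => RatFunc.C j.1) : Unit ⊕ Z → RatFunc K)
    (by
      rintro (j | j)
      · exact RatFunc.X_ne_zero
      · intro h
        have h1 : (j : K) = 0 := by simpa using h
        exact hZi.ne_zero j h1) hcard
  obtain ⟨q, hq, hspec⟩ := spec hw T
  obtain ⟨α, hα, hαq⟩ := pick hζ.1 q hq
  obtain ⟨O, Ψ, h1, ⟨h2, h2'⟩, h3⟩ := hspec Ω _ hαq
  have htO : ∀ j, (Sum.elim (fun _ => RatFunc.X) (fun j => RatFunc.C j.1) : Unit ⊕ Z → RatFunc K) j ∈ O := by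
    rintro (j | j)
    · exact h2
    · exact (h3 (Sum.inl j)).1
  obtain ⟨e, he⟩ := hT O Ψ h1 (by
    intro i
    obtain ⟨h, h'⟩ := h3 (Sum.inr i)
    have e1 : RatFunc.C (Sum.elim (Subtype.val : Z → K)
        (algebraMap S0 K ∘ (hy0i.aevalEquiv ∘ MvPolynomial.X)) (Sum.inr i)) = (i : RatFunc K) := by
      rw [Sum.elim_inr, hwY, hy0]
    have hm : (i : RatFunc K) ∈ O := by rw [← e1]; exact h
    have e2 : (⟨i, hm⟩ : O) = ⟨_, h⟩ := Subtype.ext e1.symm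
    refine ⟨hm, ?_⟩
    rw [e2, h']
    exact (hα i).algebraMap) htO (by
    have hfun : (fun j => Ψ ⟨_, htO j⟩) =
        Sum.elim (fun _ => RatFunc.X) (algebraMap Ω (RatFunc Ω) ∘ ζ) := by
      funext j
      rcases j with j | j
      · exact h2'
      · obtain ⟨h, h'⟩ := h3 (Sum.inl j)
        exact h'
    rw [hfun]
    exact hζ.sumElim_comp (basis_X Ω))
  exact final_step k L Ω e he
end

section
/- Let k ⊆ K be fields, let K[s] be the polynomial ring in one variable over K, and let R be a k-subalgebra of K[s]. For each nonzero g ∈ K[s], let ḡ denote its leading form (the highest-degree homogeneous summand of g as a polynomial in s), and let k[R̄] be the k-subalgebra of K[s] generated by { r̄ : r ∈ R, r ≠ 0 }. Then tr.deg_k k[R̄] ≤ tr.deg_k R. -/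
open Polynomial

/-- The transcendence degree of an `R`-algebra `A`: the supremum of the cardinalities of
algebraically independent subsets of `A` over `R`. -/
noncomputable def trdeg (R A : Type*) [CommRing R] [CommRing A] [Algebra R A] : Cardinal :=
  ⨆ s : { s : Set A // AlgebraicIndependent R ((↑) : s → A) }, Cardinal.mk s.1

/-- Polynomials whose leading forms are algebraically independent are themselves
algebraically independent. -/
theorem algInd_of_leadingForms {k K ι : Type*} [Field k] [Field K] [Algebra k K]
    (r : ι → Polynomial K) (hr : ∀ i, r i ≠ 0)
    (h : AlgebraicIndependent k (fun i => C (r i).leadingCoeff * X ^ (r i).natDegree)) :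
    AlgebraicIndependent k r := by
  classical
  rw [algebraicIndependent_iff] at h ⊢
  intro p hp
  by_contra hp0
  have hdeg : ∀ d : ι →₀ ℕ, (∏ i ∈ d.support, r i ^ d i).natDegree
      = Finsupp.weight (fun i => (r i).natDegree) d := by
    intro d
    rw [natDegree_prod _ _ (fun i _ => pow_ne_zero _ (hr i)), Finsupp.weight_apply, Finsupp.sum]
    simp [natDegree_pow]
  have hlf : ∀ d : ι →₀ ℕ,
      (∏ i ∈ d.support, (C (r i).leadingCoeff * X ^ (r i).natDegree) ^ d i : Polynomial K)
      = C (∏ i ∈ d.support, r i ^ d i).leadingCoeff *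
        X ^ (Finsupp.weight (fun i => (r i).natDegree) d) := by
    intro d
    rw [leadingCoeff_prod, Finsupp.weight_apply, Finsupp.sum, map_prod,
      ← Finset.prod_pow_eq_pow_sum, ← Finset.prod_mul_distrib]
    refine Finset.prod_congr rfl fun i _ => ?_
    rw [mul_pow, leadingCoeff_pow, C_pow, ← pow_mul, smul_eq_mul, mul_comm (d i)]
  obtain ⟨m, hm, hmax⟩ := Finset.exists_max_image p.support
    (Finsupp.weight (fun i => (r i).natDegree)) (MvPolynomial.support_nonempty.mpr hp0)
  set w : ι → ℕ := fun i => (r i).natDegree with hw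
  have key : MvPolynomial.aeval (fun i => C (r i).leadingCoeff * X ^ (r i).natDegree)
      (MvPolynomial.weightedHomogeneousComponent w (Finsupp.weight w m) p)
      = C ((MvPolynomial.aeval r p).coeff (Finsupp.weight w m)) * X ^ (Finsupp.weight w m) := by
    rw [MvPolynomial.weightedHomogeneousComponent_apply, map_sum, MvPolynomial.aeval_def r p,
      MvPolynomial.eval₂_eq, finsetSum_coeff, map_sum, Finset.sum_mul, Finset.sum_filter]
    refine Finset.sum_congr rfl fun d hd => ?_
    rw [IsScalarTower.algebraMap_apply k K K[X], algebraMap_eq, coeff_C_mul]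
    split_ifs with hdm
    · rw [MvPolynomial.aeval_monomial, Finsupp.prod, hlf, ← hdm, C_mul,
        IsScalarTower.algebraMap_apply k K K[X], algebraMap_eq, mul_assoc, ← hdeg d, coeff_natDegree]
    · rw [coeff_eq_zero_of_natDegree_lt]
      · simp
      · rw [hdeg]
        exact lt_of_le_of_ne (hmax d hd) hdm
  rw [hp] at key
  have h0 := h _ (by simpa using key)
  have := congrArg (MvPolynomial.coeff m) h0
  rw [MvPolynomial.coeff_weightedHomogeneousComponent, if_pos rfl] at this
  exact MvPolynomial.mem_support_iff.mp hm this

/-- Let `k ⊆ K` be fields, `K[s]` the polynomial ring, and `R` a `k`-subalgebra of `K[s]`.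
If `k[R̄]` denotes the `k`-subalgebra generated by the leading forms of the nonzero elements
of `R`, then `tr.deg_k k[R̄] ≤ tr.deg_k R`. -/
theorem trdeg_leadingForms_le (k K : Type*) [Field k] [Field K] [Algebra k K]
    (R : Subalgebra k (Polynomial K)) :
    ∀ Rbar : Subalgebra k (Polynomial K),
      Rbar = Algebra.adjoin k {p : Polynomial K | ∃ r ∈ R, r ≠ 0 ∧
          p = Polynomial.C r.leadingCoeff * Polynomial.X ^ r.natDegree} →
      trdeg k (FractionRing ↥Rbar) ≤ trdeg k (FractionRing ↥R) := by
  rintro Rbar rfl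
  set S : Set K[X] := {p : Polynomial K | ∃ r ∈ R, r ≠ 0 ∧
          p = Polynomial.C r.leadingCoeff * Polynomial.X ^ r.natDegree} with hS
  change Algebra.trdeg k (FractionRing ↥(Algebra.adjoin k S)) ≤ Algebra.trdeg k (FractionRing ↥R)
  have halg : Algebra.IsAlgebraic
      (Algebra.adjoin k (((↑) : Algebra.adjoin k S → K[X]) ⁻¹' S)) (Algebra.adjoin k S) := by
    rw [Algebra.adjoin_adjoin_coe_preimage]
    exact ⟨fun x => isAlgebraic_algebraMap
      (⟨x, trivial⟩ : (⊤ : Subalgebra k (Algebra.adjoin k S)))⟩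
  obtain ⟨t, hts, ht⟩ := exists_isTranscendenceBasis_subset (R := k)
    (((↑) : Algebra.adjoin k S → K[X]) ⁻¹' S)
  have hfr : Algebra.IsAlgebraic (Algebra.adjoin k S) (FractionRing ↥(Algebra.adjoin k S)) :=
    IsLocalization.isAlgebraic _ (nonZeroDivisors (Algebra.adjoin k S))
  have hb := ht.algebraMap_comp (A := FractionRing ↥(Algebra.adjoin k S))
  rw [← hb.cardinalMk_eq_trdeg]
  choose r hrR hr0 hr using fun b : t => hts b.2
  have hind : AlgebraicIndependent k (fun b : t => ((b : Algebra.adjoin k S) : K[X])) :=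
    ht.1.map' (f := (Algebra.adjoin k S).val) Subtype.val_injective
  have h1 : AlgebraicIndependent k r :=
    algInd_of_leadingForms r hr0 (by simpa only [hr] using hind)
  have h2 : AlgebraicIndependent k (fun b : t => (⟨r b, hrR b⟩ : R)) :=
    AlgebraicIndependent.of_comp R.val h1
  have h3 := h2.map' (f := IsScalarTower.toAlgHom k R (FractionRing R))
    (FaithfulSMul.algebraMap_injective R (FractionRing R))
  exact h3.cardinalMk_le_trdeg
end
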